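/- Let A be a Gorenstein commutative Noetherian local ring of Krull dimension d, N a finitely generated A-module, and j a natural number. If Ext^j_A(N, A) ≠ 0, then dim Ext^j_A(N, A) ≤ d − j, where dim denotes the Krull dimension of A modulo the annihilator of the module. -/

import Mathlib

/-!
STATEMENT 11: Let A be a Gorenstein commutative Noetherian local ring of Krull dimension d,
N a finitely generated A-module, and j a natural number. If Ext^j_A(N, A) ≠ 0, then
dim Ext^j_A(N, A) ≤ d − j (formalized as dim Ext^j_A(N, A) + j ≤ d), where dim denotes the
Krull dimension of A modulo the annihilator of the module.
-/

open CategoryTheory Opposite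

noncomputable section

universe u

/-- The `t`-th Ext group `Ext_A^t(N, A)`, as an `A`-module. -/
abbrev extPow (A : Type u) [CommRing A] (N : Type u) [AddCommGroup N] [Module A N]
    (t : ℕ) : ModuleCat.{u} A :=
  ((_root_.Ext.{u} A (ModuleCat.{u} A) t).obj (op (ModuleCat.of A N))).obj (ModuleCat.of A A)

/-- `A` has finite injective dimension as a module over itself. -/
def HasFiniteSelfInjDim (A : Type u) [CommRing A] : Prop :=
  ∃ n : ℕ, ∀ (M : ModuleCat.{u} A) (i : ℕ), n < i →
    Subsingleton (((_root_.Ext.{u} A (ModuleCat.{u} A) i).obj (op M)).obj (ModuleCat.of A A))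

/-!
The ring `A` in the second argument of `Ext` may be any finite module `Y` of finite injective
dimension. A short exact sequence bounds the support dimension of the middle `Ext^j(-, Y)` by those
of the outer ones, so filtering by quotients `A ⧸ p` reduces every bound to the case of `A ⧸ p`. If
`p ≠ 𝔪`, an element `x ∈ 𝔪` outside `p` is regular on `A ⧸ p`, and the long exact sequence embeds
`Ext^j(A ⧸ p, Y) / x` into `Ext^{j+1}(A ⧸ (p, x), Y)`. As cutting by `x` lowers the dimension by at
most one, lowering `j` by one raises the dimension by at most one, and `Ext^j(A ⧸ 𝔪, Y)` has
dimension at most zero. It remains to see that `Ext^r(-, Y)` vanishes for `r > dim A`. Cutting `A`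
by a maximal regular sequence gives a module `N` of projective dimension at most `dim A` containing
`A ⧸ 𝔪`. If `Ext^{r+1}(-, Y) = 0` then `Ext^r(N, Y) = 0` surjects onto `Ext^r(A ⧸ 𝔪, Y)`, and the
filtration argument spreads this vanishing to all finite modules. Finiteness of the injective
dimension starts this descending induction.
-/

universe w

section ExtComparison

open Limits

variable {R : Type*} [Ring R] {C : Type*} [Category* C] [Abelian C] [Linear R C] [HasExt.{w} C]

lemma extMk_zero_eq_zero_iff {X Y : C} (P : ProjectiveResolution X)
    (f : P.complex.X 0 ⟶ Y) (m : ℕ) (hm : 0 + 1 = m) (hf : P.complex.d m 0 ≫ f = 0) :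
    P.extMk f m hm hf = 0 ↔ f = 0 := by
  refine ⟨fun h ↦ ?_, by rintro rfl; simp⟩
  rw [← P.extEquivCohomologyClass.apply_eq_iff_eq, P.extEquivCohomologyClass_extMk,
    P.extEquivCohomologyClass_zero, CochainComplex.HomComplex.CohomologyClass.mk_eq_zero_iff,
    CochainComplex.HomComplex.Cocycle.toSingleMk_mem_coboundaries_iff _ _ _ _ _ 1 (by simp)] at h
  obtain ⟨g, hg⟩ := h
  have hzero : IsZero (P.cochainComplex.X 1) := P.cochainComplex.isZero_of_isStrictlyLE 0 1
  rw [hzero.eq_of_src g 0, comp_zero] at hg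
  rw [← cancel_epi (P.cochainComplexXIso (-((0 : ℕ) : ℤ)) 0 rfl).hom, ← hg, comp_zero]

variable (R) in
/-- The class map from the `n`-cocycles of `Hom(P, Y)`, for a projective resolution `P` of `X`,
onto `Ext^n(X, Y)` defined through the derived category. -/
def cocyclesToExt {X : C} (P : ProjectiveResolution X) (Y : C) (n : ℕ) :
    LinearMap.ker ((P.complex.linearYonedaObj R Y).sc n).g.hom →ₗ[R] Abelian.Ext.{w} X Y n where
  toFun f := P.extMk (f.1 : P.complex.X n ⟶ Y) _ (by simp) f.2
  map_add' f g := (P.add_extMk _ _ _ _ _ _).symm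
  map_smul' r f := by
    have hsmul : ((r • f).1 : P.complex.X n ⟶ Y) = (f.1 : P.complex.X n ⟶ Y) ≫ (r • 𝟙 Y) :=
      ((Linear.comp_smul _ _ _ _ r (𝟙 Y)).trans
        (congrArg (r • ·) (Category.comp_id (f.1 : P.complex.X n ⟶ Y)))).symm
    refine Eq.trans ?_ (Abelian.Ext.smul_eq_comp_mk₀ _ _).symm
    refine Eq.trans ?_
      (P.extMk_comp_mk₀ (f.1 : P.complex.X n ⟶ Y) _ (by simp) f.2 (r • 𝟙 Y)).symm
    congr 1

lemma cocyclesToExt_surjective {X : C} (P : ProjectiveResolution X) (Y : C)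
    (n : ℕ) : Function.Surjective (cocyclesToExt R P Y n) := fun α ↦ by
  obtain ⟨f, hf, rfl⟩ := P.extMk_surjective α ((ComplexShape.up ℕ).next n) (by simp)
  exact ⟨⟨f, hf⟩, rfl⟩

lemma ker_cocyclesToExt {X : C} (P : ProjectiveResolution X) (Y : C) (n : ℕ) :
    LinearMap.ker (cocyclesToExt R P Y n) =
      LinearMap.range ((P.complex.linearYonedaObj R Y).sc n).moduleCatToCycles := by
  ext ⟨f, hf⟩
  rw [LinearMap.mem_ker, LinearMap.mem_range]
  cases n with
  | zero =>
    have hd : ((P.complex.linearYonedaObj R Y).sc 0).f = 0 :=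
      (P.complex.linearYonedaObj R Y).shape ((ComplexShape.up ℕ).prev 0) 0 (by simp)
    have hboundary (x) : ((P.complex.linearYonedaObj R Y).sc 0).f.hom x = 0 := by
      rw [hd]
      rfl
    refine (extMk_zero_eq_zero_iff P f _ (by simp) hf).trans ⟨?_, ?_⟩
    · rintro rfl
      exact ⟨0, map_zero _⟩
    · rintro ⟨x, hx⟩
      exact (congrArg Subtype.val hx).symm.trans (hboundary x)
  | succ n =>
    exact (P.extMk_eq_zero_iff f _ (by simp) hf ((ComplexShape.up ℕ).prev (n + 1))
      (by simp)).trans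
      ⟨fun ⟨g, hg⟩ ↦ ⟨g, Subtype.ext hg⟩, fun ⟨g, hg⟩ ↦ ⟨g, congrArg Subtype.val hg⟩⟩

variable (R) in
/-- The derived functor of `Hom(-, Y)`, which Mathlib calls `Ext R C n`, agrees with the `Ext`
defined through the derived category, for which Mathlib has the long exact sequences. -/
def extObjLinearEquiv [EnoughProjectives C] (X Y : C) (n : ℕ) :
    ((_root_.Ext R C n).obj (op X)).obj Y ≃ₗ[R] Abelian.Ext.{w} X Y n :=
  let P := projectiveResolution X
  ((P.isoExt n Y).trans
      ((P.complex.linearYonedaObj R Y).sc n).moduleCatHomologyIso).toLinearEquiv.trans <|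
    (Submodule.quotEquivOfEq _ _ (ker_cocyclesToExt P Y n).symm).trans <|
      LinearMap.quotKerEquivOfSurjective _ (cocyclesToExt_surjective P Y n)

end ExtComparison

section Support

open IsLocalRing Module

variable {R E F G : Type*} [CommRing R] [AddCommGroup E] [Module R E]
  [AddCommGroup F] [Module R F] [AddCommGroup G] [Module R G]

lemma length_le_supportDim (s : LTSeries (support R E)) (hs : s.head.1 ∈ support R F) :
    (s.length : WithBot ℕ∞) ≤ supportDim R F :=
  let t : LTSeries (support R F) :=
    .mk s.length (fun i ↦ ⟨(s i).1, mem_support_mono (s.monotone (Fin.zero_le i)) hs⟩)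
      (fun _ _ hij ↦ s.strictMono hij)
  Order.LTSeries.length_le_krullDim t

lemma support_subset_union_of_exact {f : E →ₗ[R] F} {g : F →ₗ[R] G} (h : Function.Exact f g) :
    support R F ⊆ support R E ∪ support R G := by
  rw [support_of_exact h.linearMap_rangeRestrict (LinearMap.range f).subtype_injective
    g.surjective_rangeRestrict]
  exact Set.union_subset_union
    (support_subset_of_surjective _ f.surjective_rangeRestrict)
    (support_subset_of_injective _ (LinearMap.range g).subtype_injective)

lemma supportDim_le_max_of_exact {f : E →ₗ[R] F} {g : F →ₗ[R] G} (h : Function.Exact f g) :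
    supportDim R F ≤ max (supportDim R E) (supportDim R G) :=
  iSup_le fun s ↦ (support_subset_union_of_exact h s.head.2).elim
    (fun hs ↦ le_max_of_le_left (length_le_supportDim s hs))
    (fun hs ↦ le_max_of_le_right (length_le_supportDim s hs))

lemma supportDim_nonpos_of_maximalIdeal_le_annihilator [IsLocalRing R]
    (h : maximalIdeal R ≤ annihilator R E) : supportDim R E ≤ 0 := by
  have eq_maximalIdeal (p : support R E) : p.1.asIdeal = maximalIdeal R :=
    le_antisymm (le_maximalIdeal p.1.2.ne_top) (h.trans (annihilator_le_of_mem_support p.2))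
  have : Subsingleton (support R E) :=
    ⟨fun p q ↦ Subtype.ext (PrimeSpectrum.ext ((eq_maximalIdeal p).trans (eq_maximalIdeal q).symm))⟩
  exact Order.krullDim_nonpos_of_subsingleton

lemma exists_ringKrullDim_eq_natCast (R : Type*) [CommRing R] [FiniteRingKrullDim R] :
    ∃ d : ℕ, ringKrullDim R = d :=
  ⟨_, Order.krullDim_eq_length_of_finiteDimensionalOrder⟩

lemma exists_mem_maximalIdeal_isSMulRegular_quotient [IsLocalRing R] {p : Ideal R} [p.IsPrime]
    (hp : p ≠ maximalIdeal R) : ∃ x ∈ maximalIdeal R, IsSMulRegular (R ⧸ p) x := by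
  obtain ⟨x, hx, hxp⟩ := SetLike.exists_of_lt
    ((le_maximalIdeal (Ideal.IsPrime.ne_top ‹_›)).lt_of_ne hp)
  exact ⟨x, hx, (isSMulRegular_quotient_iff_mem_of_smul_mem _ _).mpr fun _ h ↦
    (Ideal.IsPrime.mem_or_mem ‹_› h).resolve_left hxp⟩

variable (E) in
lemma exists_isSMulRegular_or_exists_injective_residueField [IsLocalRing R] [IsNoetherianRing R]
    [Module.Finite R E] :
    (∃ x ∈ maximalIdeal R, IsSMulRegular E x) ∨
      ∃ f : R ⧸ maximalIdeal R →ₗ[R] E, Function.Injective f := by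
  rcases subsingleton_or_nontrivial (R ⧸ maximalIdeal R →ₗ[R] E) with hE | hE
  · left
    simpa only [Ideal.annihilator_quotient] using IsSMulRegular.subsingleton_linearMap_iff.mp hE
  · obtain ⟨f, hf⟩ := exists_ne (0 : R ⧸ maximalIdeal R →ₗ[R] E)
    have : IsSimpleModule R (R ⧸ maximalIdeal R) :=
      isSimpleModule_iff_isCoatom.mpr (maximalIdeal.isMaximal R).out
    exact .inr ⟨f, LinearMap.injective_of_ne_zero hf⟩

end Support

section ExtMaps

variable {R : Type*} [CommRing R] {C : Type*} [Category* C] [Abelian C] [Linear R C]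
  [HasExt.{w} C]

lemma mk₀_smul_id_comp {X Y : C} {j : ℕ} (r : R) (α : Abelian.Ext X Y j) :
    (Abelian.Ext.mk₀ (r • 𝟙 X)).comp α (zero_add j) = r • α := by
  rw [Abelian.Ext.mk₀_smul, Abelian.Ext.smul_comp, Abelian.Ext.mk₀_id_comp]

variable (R) in
lemma precompOfLinear_mk₀_injective {X X' : C} (f : X ⟶ X') [IsSplitEpi f] (Y : C) (j : ℕ) :
    Function.Injective ((Abelian.Ext.mk₀ f).precompOfLinear R Y (zero_add j)) :=
  Function.LeftInverse.injective
    (g := (Abelian.Ext.mk₀ (section_ f)).precompOfLinear R Y (zero_add j)) fun α ↦ by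
    change (Abelian.Ext.mk₀ _).comp ((Abelian.Ext.mk₀ _).comp α (zero_add j)) (zero_add j) = α
    rw [Abelian.Ext.mk₀_comp_mk₀_assoc, IsSplitEpi.id, Abelian.Ext.mk₀_id_comp]

variable (R) in
lemma exact_precompOfLinear_mk₀ {S : ShortComplex C} (hS : S.ShortExact) (Y : C) (j : ℕ) :
    Function.Exact ((Abelian.Ext.mk₀ S.g).precompOfLinear R Y (zero_add j))
      ((Abelian.Ext.mk₀ S.f).precompOfLinear R Y (zero_add j)) := fun α ↦ by
  refine ⟨Abelian.Ext.contravariant_sequence_exact₂ hS Y α, ?_⟩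
  rintro ⟨β, rfl⟩
  change (Abelian.Ext.mk₀ _).comp ((Abelian.Ext.mk₀ _).comp β (zero_add j)) (zero_add j) = 0
  rw [Abelian.Ext.mk₀_comp_mk₀_assoc, S.zero, Abelian.Ext.mk₀_zero, Abelian.Ext.zero_comp]

lemma subsingleton_ext_X₁ {S : ShortComplex C} (hS : S.ShortExact) {Y : C} {j : ℕ}
    (h₂ : Subsingleton (Abelian.Ext S.X₂ Y j)) (h₃ : Subsingleton (Abelian.Ext S.X₃ Y (j + 1))) :
    Subsingleton (Abelian.Ext S.X₁ Y j) := subsingleton_of_forall_eq 0 fun α ↦ by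
  obtain ⟨β, rfl⟩ :=
    Abelian.Ext.contravariant_sequence_exact₁ hS Y α (add_comm 1 j) (Subsingleton.elim _ _)
  rw [Subsingleton.elim β 0, Abelian.Ext.comp_zero]

variable (R) in
lemma exact_precompOfLinear_extClass {S : ShortComplex C} (hS : S.ShortExact) (Y : C) (j : ℕ) :
    Function.Exact ((Abelian.Ext.mk₀ S.f).precompOfLinear R Y (zero_add j))
      (hS.extClass.precompOfLinear R Y (add_comm 1 j)) := fun α ↦ by
  refine ⟨Abelian.Ext.contravariant_sequence_exact₁ hS Y α (add_comm 1 j), ?_⟩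
  rintro ⟨β, rfl⟩
  exact hS.extClass_comp_assoc β (h := add_comm 1 j)

end ExtMaps

section ExtModule

open IsLocalRing Module Pointwise

variable {A : Type u} [CommRing A] (X Y : ModuleCat.{u} A)

lemma annihilator_le_annihilator_ext (j : ℕ) :
    annihilator A X ≤ annihilator A (Abelian.Ext X Y j) := fun x hx ↦
  mem_annihilator.mpr fun α ↦ by
    have smul_id_eq_zero : x • 𝟙 X = 0 :=
      ModuleCat.hom_ext (LinearMap.ext (mem_annihilator.mp hx))
    rw [← mk₀_smul_id_comp, smul_id_eq_zero, Abelian.Ext.mk₀_zero, Abelian.Ext.zero_comp]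

variable {X}

lemma supportDim_quotSMulTop_ext_le {x : A} (hx : IsSMulRegular X x) (j : ℕ) :
    supportDim A (QuotSMulTop x (Abelian.Ext X Y j)) ≤
      supportDim A (Abelian.Ext (ModuleCat.of A (QuotSMulTop x X)) Y (j + 1)) := by
  let δ : Abelian.Ext X Y j →ₗ[A] Abelian.Ext (ModuleCat.of A (QuotSMulTop x X)) Y (j + 1) :=
    hx.smulShortComplex_shortExact.extClass.precompOfLinear A Y (add_comm 1 j)
  have ker_δ : LinearMap.ker δ = x • (⊤ : Submodule A (Abelian.Ext X Y j)) := by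
    ext α
    rw [Submodule.mem_smul_pointwise_iff_exists]
    exact (exact_precompOfLinear_extClass A hx.smulShortComplex_shortExact Y j α).trans <|
      exists_congr fun β ↦ (Eq.congr_left (mk₀_smul_id_comp x β)).trans (and_iff_right trivial).symm
  exact supportDim_le_of_injective (Submodule.liftQ _ δ ker_δ.ge)
    (LinearMap.ker_eq_bot.mp (Submodule.ker_liftQ_eq_bot _ _ _ ker_δ.le))

lemma supportDim_ext_residueField_nonpos [IsLocalRing A] (j : ℕ) :
    supportDim A (Abelian.Ext (ModuleCat.of A (A ⧸ maximalIdeal A)) Y j) ≤ 0 :=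
  supportDim_nonpos_of_maximalIdeal_le_annihilator <|
    Ideal.annihilator_quotient.ge.trans <|
      annihilator_le_annihilator_ext (ModuleCat.of A (A ⧸ maximalIdeal A)) Y j

variable [IsNoetherianRing A]

/-- The case `b = ⊥` is a criterion for the vanishing of `Ext^j(-, Y)`. -/
lemma supportDim_ext_le_of_forall_prime {j : ℕ} {b : WithBot ℕ∞}
    (h : ∀ p : PrimeSpectrum A,
      supportDim A (Abelian.Ext (ModuleCat.of A (A ⧸ p.asIdeal)) Y j) ≤ b)
    (M : Type u) [AddCommGroup M] [Module A M] [hM : Module.Finite A M] :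
    supportDim A (Abelian.Ext (ModuleCat.of A M) Y j) ≤ b := by
  induction hM using IsNoetherianRing.induction_on_isQuotientEquivQuotientPrime A with
  | subsingleton N =>
    have := (ModuleCat.isZero_of_subsingleton (ModuleCat.of A N)).hasProjectiveDimensionLT_zero
    have := HasProjectiveDimensionLT.subsingleton (ModuleCat.of A N) 0 j j.zero_le Y
    exact (supportDim_eq_bot_of_subsingleton A _).trans_le bot_le
  | quotient N p e =>
    exact (supportDim_le_of_injective _
      (precompOfLinear_mk₀_injective A e.symm.toModuleIso.hom Y j)).trans (h p)
  | exact N₁ N₂ N₃ f g hf hg hfg h₁ h₃ =>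
    have hS := ModuleCat.shortComplex_shortExact
      (ModuleCat.shortComplexOfCompEqZero f g hfg.linearMap_comp_eq_zero) hfg hf hg
    exact (supportDim_le_max_of_exact (exact_precompOfLinear_mk₀ A hS Y j)).trans (max_le h₃ h₁)

variable [IsLocalRing A]

lemma exists_injective_projectiveDimension_add_supportDim_eq
    (X : ModuleCat.{u} A) [Module.Finite A X] [Nontrivial X] :
    ∃ (N : ModuleCat.{u} A) (_ : Module.Finite A N) (f : A ⧸ maximalIdeal A →ₗ[A] N),
      Function.Injective f ∧
        projectiveDimension N + supportDim A N = projectiveDimension X + supportDim A X := by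
  obtain ⟨d, hd⟩ := exists_ringKrullDim_eq_natCast A
  have hn : supportDim A X < (d + 1 : ℕ) :=
    (supportDim_le_ringKrullDim A X).trans_lt (hd.trans_lt (mod_cast d.lt_succ_self))
  generalize d + 1 = n at hn
  induction n generalizing X with
  | zero =>
    have := (nonempty_support_of_nontrivial (R := A) (M := X)).to_subtype
    exact absurd hn Order.krullDim_nonneg.not_gt
  | succ n ih =>
    obtain ⟨x, hx, hreg⟩ | ⟨f, hf⟩ :=
      exists_isSMulRegular_or_exists_injective_residueField (R := A) X
    · have hdim := supportDim_quotSMulTop_succ_eq_supportDim hreg hx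
      have hlt : supportDim A (QuotSMulTop x X) < n := by
        rwa [← hdim, Nat.cast_succ, ENat.WithBot.lt_add_one_iff,
          ENat.WithBot.add_one_le_natCast_iff] at hn
      have := nontrivial_quotSMulTop_of_mem_maximalIdeal X hx
      obtain ⟨N, hN, f, hf, heq⟩ := ih (ModuleCat.of A (QuotSMulTop x X)) hlt
      refine ⟨N, hN, f, hf, heq.trans ?_⟩
      rw [ModuleCat.projectiveDimension_quotSMulTop_eq_succ_of_isSMulRegular X x hreg hx, ← hdim,
        add_assoc, add_comm 1]
    · exact ⟨X, ‹_›, f, hf, rfl⟩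

variable (A) in
lemma exists_injective_projectiveDimension_le_ringKrullDim :
    ∃ (N : ModuleCat.{u} A) (_ : Module.Finite A N) (f : A ⧸ maximalIdeal A →ₗ[A] N),
      Function.Injective f ∧ projectiveDimension N ≤ ringKrullDim A := by
  obtain ⟨N, hN, f, hf, heq⟩ :=
    exists_injective_projectiveDimension_add_supportDim_eq (ModuleCat.of A A)
  rw [ModuleCat.projectiveDimension_eq_zero_of_projective (ModuleCat.of A A), zero_add,
    supportDim_self_eq_ringKrullDim] at heq
  have := hf.nontrivial
  have := (nonempty_support_of_nontrivial (R := A) (M := N)).to_subtype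
  exact ⟨N, hN, f, hf, heq ▸ le_add_of_nonneg_right Order.krullDim_nonneg⟩

variable [Module.Finite A Y]

lemma supportDim_ext_le_supportDim_ext_quotSMulTop_succ [Module.Finite A X] {x : A}
    (hx : x ∈ maximalIdeal A) (hreg : IsSMulRegular X x) (j : ℕ) :
    supportDim A (Abelian.Ext X Y j) ≤
      supportDim A (Abelian.Ext (ModuleCat.of A (QuotSMulTop x X)) Y (j + 1)) + 1 :=
  (supportDim_le_supportDim_quotSMulTop_succ hx).trans
    (add_le_add_left (supportDim_quotSMulTop_ext_le Y hreg j) 1)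

lemma supportDim_ext_le_of_residueField {j : ℕ} {b : WithBot ℕ∞}
    (h₀ : supportDim A (Abelian.Ext (ModuleCat.of A (A ⧸ maximalIdeal A)) Y j) ≤ b)
    (h : ∀ (X : ModuleCat.{u} A) [Module.Finite A X],
      supportDim A (Abelian.Ext X Y (j + 1)) + 1 ≤ b)
    (X : ModuleCat.{u} A) [Module.Finite A X] : supportDim A (Abelian.Ext X Y j) ≤ b := by
  refine supportDim_ext_le_of_forall_prime Y (fun p ↦ ?_) X
  by_cases hp : p.asIdeal = maximalIdeal A
  · rwa [hp]
  · obtain ⟨x, hx, hreg⟩ := exists_mem_maximalIdeal_isSMulRegular_quotient hp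
    exact (supportDim_ext_le_supportDim_ext_quotSMulTop_succ Y
      (X := ModuleCat.of A (A ⧸ p.asIdeal)) hx hreg j).trans (h _)

variable {Y}

lemma supportDim_ext_le_of_add_eq {r : ℕ}
    (hvan : ∀ (X : ModuleCat.{u} A) [Module.Finite A X], Subsingleton (Abelian.Ext X Y (r + 1)))
    (m : ℕ) {j : ℕ} (hmj : m + j = r) (X : ModuleCat.{u} A) [Module.Finite A X] :
    supportDim A (Abelian.Ext X Y j) ≤ m := by
  induction m generalizing j X with
  | zero =>
    obtain rfl : j = r := by omega
    refine supportDim_ext_le_of_residueField Y (supportDim_ext_residueField_nonpos Y j)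
      (fun X _ ↦ ?_) X
    have := hvan X
    simp [supportDim_eq_bot_of_subsingleton]
  | succ m ih =>
    refine supportDim_ext_le_of_residueField Y
      ((supportDim_ext_residueField_nonpos Y j).trans (mod_cast (m + 1).zero_le)) (fun X _ ↦ ?_) X
    exact_mod_cast add_le_add_left (ih (j := j + 1) (by omega) X) 1

lemma subsingleton_ext_of_ringKrullDim_lt_of_succ {r : ℕ} (hr : ringKrullDim A < r)
    (hvan : ∀ (X : ModuleCat.{u} A) [Module.Finite A X], Subsingleton (Abelian.Ext X Y (r + 1)))
    (X : ModuleCat.{u} A) [Module.Finite A X] : Subsingleton (Abelian.Ext X Y r) := by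
  obtain ⟨N, _, f, hf, hpd⟩ := exists_injective_projectiveDimension_le_ringKrullDim A
  have : HasProjectiveDimensionLT N r := projectiveDimension_lt_iff.mp (hpd.trans_lt hr)
  have : Subsingleton (Abelian.Ext N Y r) := HasProjectiveDimensionLT.subsingleton N r r le_rfl Y
  have := hvan (ModuleCat.of A (N ⧸ LinearMap.range f))
  have hS := ModuleCat.shortComplex_shortExact
    (ModuleCat.shortComplexOfCompEqZero f (LinearMap.range f).mkQ (LinearMap.range_mkQ_comp f))
    (LinearMap.exact_map_mkQ_range f) hf (Submodule.mkQ_surjective _)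
  have : Subsingleton (Abelian.Ext (ModuleCat.of A (A ⧸ maximalIdeal A)) Y r) :=
    subsingleton_ext_X₁ hS ‹_› ‹_›
  rw [← supportDim_eq_bot_iff_subsingleton (R := A), ← le_bot_iff]
  refine supportDim_ext_le_of_residueField Y (supportDim_eq_bot_of_subsingleton A _).le
    (fun Z _ ↦ ?_) X
  have := hvan Z
  simp [supportDim_eq_bot_of_subsingleton]

lemma subsingleton_ext_of_ringKrullDim_lt (hY : injectiveDimension Y ≠ ⊤) {r : ℕ}
    (hr : ringKrullDim A < r) (X : ModuleCat.{u} A) [Module.Finite A X] :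
    Subsingleton (Abelian.Ext X Y r) := by
  obtain ⟨n, hn⟩ := (injectiveDimension_ne_top_iff Y).mp hY
  obtain hrn | hnr := le_total r (n + 1)
  · induction hrn using Nat.decreasingInduction generalizing X with
    | self => exact HasInjectiveDimensionLT.subsingleton Y _ _ le_rfl X
    | of_succ i _ ih =>
      exact subsingleton_ext_of_ringKrullDim_lt_of_succ hr
        (fun Z _ ↦ ih (hr.trans (mod_cast i.lt_succ_self)) Z) X
  · exact HasInjectiveDimensionLT.subsingleton Y _ _ hnr X

lemma supportDim_ext_add_le (hY : injectiveDimension Y ≠ ⊤) (X : ModuleCat.{u} A)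
    [Module.Finite A X] (j : ℕ) :
    supportDim A (Abelian.Ext X Y j) + j ≤ ringKrullDim A := by
  obtain ⟨d, hd⟩ := exists_ringKrullDim_eq_natCast A
  have hvan {i : ℕ} (hi : d < i) := subsingleton_ext_of_ringKrullDim_lt hY (r := i)
    (hd.trans_lt (mod_cast hi))
  rw [hd]
  obtain hjd | hdj := le_or_gt j d
  · have hdim : supportDim A (Abelian.Ext X Y j) ≤ (d - j : ℕ) :=
      supportDim_ext_le_of_add_eq (hvan d.lt_succ_self) _ (Nat.sub_add_cancel hjd) X
    calc supportDim A (Abelian.Ext X Y j) + j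
        ≤ (d - j : ℕ) + j := add_le_add_left hdim _
      _ = d := mod_cast Nat.sub_add_cancel hjd
  · have := hvan hdj X
    simp [supportDim_eq_bot_of_subsingleton]

end ExtModule

lemma HasFiniteSelfInjDim.injectiveDimension_ne_top {A : Type u} [CommRing A]
    (h : HasFiniteSelfInjDim A) : injectiveDimension (ModuleCat.of A A) ≠ ⊤ := by
  obtain ⟨n, hn⟩ := h
  refine (injectiveDimension_ne_top_iff _).mpr ⟨n, .mk fun i hi X α ↦ ?_⟩
  have := hn X i hi
  have := (extObjLinearEquiv (R := A) X (ModuleCat.of A A) i).symm.toEquiv.subsingleton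
  exact Subsingleton.elim α 0

theorem stmt11_general {A : Type u} [CommRing A] [IsNoetherianRing A] [IsLocalRing A]
    {Y : ModuleCat.{u} A} [Module.Finite A Y] (hY : injectiveDimension Y ≠ ⊤)
    (X : ModuleCat.{u} A) [Module.Finite A X] (j : ℕ) :
    ringKrullDim (A ⧸ Module.annihilator A
      (((_root_.Ext A (ModuleCat.{u} A) j).obj (op X)).obj Y)) + j ≤ ringKrullDim A := by
  rw [(extObjLinearEquiv (R := A) X Y j).annihilator_eq,
    ← Module.supportDim_eq_ringKrullDim_quotient_annihilator]
  exact supportDim_ext_add_le hY X j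

theorem stmt11 (A : Type u) [CommRing A] [IsNoetherianRing A] [IsLocalRing A]
    (hGor : HasFiniteSelfInjDim A) (d : ℕ) (hd : ringKrullDim A = d)
    (N : Type u) [AddCommGroup N] [Module A N] [Module.Finite A N] (j : ℕ)
    (hExt : Nontrivial (extPow A N j)) :
    HAdd.hAdd (α := WithBot ℕ∞) (β := WithBot ℕ∞) (γ := WithBot ℕ∞)
        (ringKrullDim (A ⧸ Module.annihilator A ↥(extPow A N j))) ((j : ℕ∞) : WithBot ℕ∞) ≤
      ((d : ℕ∞) : WithBot ℕ∞) := by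
  exact (stmt11_general hGor.injectiveDimension_ne_top (ModuleCat.of A N) j).trans_eq hd

end
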